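/- Let d ≥ 1, C > 0, t₀ > 0, and let u₀ : ℝ^d → ℝ be measurable with |u₀(x)| ≤ C e^{−|x|²/(4t₀)} for almost every x. Let u(x,t) := (G(·,t) * u₀)(x) and let u_k be the heat-kernel derivative approximation of order k built from u₀. Then for every fixed t > t₀, sup_{x ∈ ℝ^d} |u(x,t) − u_k(x,t)| → 0 as k → ∞. -/

import Mathlib

open MeasureTheory Real Filter

noncomputable section

/-- Partial derivative in the `i`-th coordinate direction on `ℝ^d`. -/
def pd (d : ℕ) (i : Fin d) (f : EuclideanSpace ℝ (Fin d) → ℝ) :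
    EuclideanSpace ℝ (Fin d) → ℝ :=
  fun x => fderiv ℝ f x (EuclideanSpace.single i 1)

/-- Mixed partial derivative `D^α = ∂₁^{α₁} ⋯ ∂_d^{α_d}`. -/
def Dmul (d : ℕ) (α : Fin d → ℕ) (f : EuclideanSpace ℝ (Fin d) → ℝ) :
    EuclideanSpace ℝ (Fin d) → ℝ :=
  ((List.finRange d).map (fun i => (pd d i)^[α i])).foldr (· ∘ ·) id f

/-- Heat kernel `G(x,t) = (4πt)^{-d/2} exp(-|x|²/(4t))` on `ℝ^d`. -/
def heatKernel (d : ℕ) (x : EuclideanSpace ℝ (Fin d)) (t : ℝ) : ℝ :=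
  (4 * π * t) ^ (-(d : ℝ) / 2) * Real.exp (-‖x‖ ^ 2 / (4 * t))

/-- The heat-kernel derivative approximation of order `k` built from `u₀`. -/
def heatApprox (d k : ℕ) (u₀ : EuclideanSpace ℝ (Fin d) → ℝ)
    (x : EuclideanSpace ℝ (Fin d)) (t : ℝ) : ℝ :=
  ∑ j ∈ Finset.range (k + 1), ∑ α ∈ Finset.Nat.antidiagonalTuple d j,
    ((-1 : ℝ) ^ (∑ i, α i) / ∏ i, ((α i).factorial : ℝ)) *
      (∫ y, (∏ i, y i ^ α i) * u₀ y) * Dmul d α (fun z => heatKernel d z t) x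

/-- The remainder function `F_α`. Here `k` should satisfy `|α| = k+1`. -/
def Falpha (d k : ℕ) (α : Fin d → ℕ) (f : EuclideanSpace ℝ (Fin d) → ℝ)
    (x : EuclideanSpace ℝ (Fin d)) : ℝ :=
  (-1 : ℝ) ^ (∑ i, α i) * ∫ t in (0:ℝ)..1,
    ((k : ℝ) + 1) * (1 - t) ^ k / t ^ (d + ∑ i, α i) *
      ((∏ i, x i ^ α i) / ∏ i, ((α i).factorial : ℝ)) * f (t⁻¹ • x)

/-- Physicists' Hermite polynomial `H_n(x) = (-1)^n e^{x²} (d/dx)^n e^{-x²}`. -/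
def hPoly (n : ℕ) (x : ℝ) : ℝ :=
  (-1 : ℝ) ^ n * Real.exp (x ^ 2) * iteratedDeriv n (fun y => Real.exp (-y ^ 2)) x

/-! Exchanging sum and integral, `u_k(x,t)` is the integral against `u₀` of the Taylor polynomial of
order `k` of `y ↦ G(x - y, t)` at `y = 0`. On the Fourier side `G(·,t)` is `exp (-4π²t|v|²)`,
translation by `y` is multiplication by `exp (2πi⟪v, y⟫)`, and the Taylor polynomial replaces this
exponential by a partial sum of its series. So the error `G(x - y, t) - (Taylor polynomial)` is at
most the tail of `exp (2π|⟪v, y⟫|)` integrated against `exp (-4π²t|v|²) dv`: a bound free of `x`.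
Completing the square, it is at most a constant times `exp (|y|²/(4t))`, for every order, and it
tends to `0` for every `y`. Dominated convergence in `y` concludes as soon as
`exp (|y|²/(4t)) u₀(y)` is integrable.
-/

section Weight

variable {X : Type*} [MeasurableSpace X] {μ : Measure X} {w p f : X → ℝ} {M : ℝ}

lemma integrable_mul_of_norm_le_mul_weight (hw : ∀ x, 0 < w x) (hwm : AEStronglyMeasurable w μ)
    (hpm : AEStronglyMeasurable p μ) (hp : ∀ x, ‖p x‖ ≤ M * w x)
    (hf : Integrable (fun x => w x * f x) μ) : Integrable (fun x => p x * f x) μ := by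
  have hbdd (x : X) : ‖p x / w x‖ ≤ M := by
    rw [norm_div, Real.norm_of_nonneg (hw x).le, div_le_iff₀ (hw x)]
    exact hp x
  refine (hf.bdd_mul (hpm.div₀ hwm) (.of_forall hbdd)).congr (.of_forall fun x => ?_)
  simp only [Pi.div_apply]
  rw [← mul_assoc, div_mul_cancel₀ _ (hw x).ne']

lemma integrable_mul_abs (hw : ∀ x, 0 ≤ w x) (hf : Integrable (fun x => w x * f x) μ) :
    Integrable (fun x => w x * |f x|) μ := by
  simpa only [abs_mul, abs_of_nonneg (hw _)] using hf.abs

end Weight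

section Gaussian

variable {b : ℝ}

lemma pow_le_mul_exp_mul_sq (hb : 0 < b) {r : ℝ} (hr : 0 ≤ r) (n : ℕ) :
    r ^ n ≤ n.factorial * Real.exp (1 / (4 * b)) * Real.exp (b * r ^ 2) := by
  have hsq : r ≤ 1 / (4 * b) + b * r ^ 2 := by
    rw [← sub_nonneg]
    have hsquare : 1 / (4 * b) + b * r ^ 2 - r = (2 * b * r - 1) ^ 2 / (4 * b) := by
      field_simp
      ring
    rw [hsquare]
    positivity
  calc r ^ n ≤ n.factorial * Real.exp r :=
        (div_le_iff₀' (by positivity)).1 (Real.pow_div_factorial_le_exp r hr n)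
    _ ≤ n.factorial * Real.exp (1 / (4 * b) + b * r ^ 2) := by gcongr
    _ = n.factorial * Real.exp (1 / (4 * b)) * Real.exp (b * r ^ 2) := by
        rw [Real.exp_add, mul_assoc]

variable {V : Type*} [NormedAddCommGroup V] [InnerProductSpace ℝ V]

open scoped RealInnerProductSpace

lemma exp_inner_mul_exp_neg_mul_sq_norm (hb : b ≠ 0) (v y : V) :
    Real.exp ⟪v, y⟫ * Real.exp (-b * ‖v‖ ^ 2) =
      Real.exp (‖y‖ ^ 2 / (4 * b)) * Real.exp (-b * ‖v - (2 * b)⁻¹ • y‖ ^ 2) := by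
  rw [← Real.exp_add, ← Real.exp_add, norm_sub_sq_real, inner_smul_right, norm_smul, mul_pow,
    Real.norm_eq_abs, sq_abs]
  congr 1
  field_simp
  ring

lemma exp_abs_inner_mul_exp_neg_mul_sq_norm_le (b : ℝ) (v y : V) :
    Real.exp |⟪v, y⟫| * Real.exp (-b * ‖v‖ ^ 2) ≤
      Real.exp ⟪v, y⟫ * Real.exp (-b * ‖v‖ ^ 2) +
        Real.exp ⟪v, -y⟫ * Real.exp (-b * ‖v‖ ^ 2) := by
  rw [← add_mul, inner_neg_right]
  gcongr
  exact Real.exp_abs_le _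

variable [FiniteDimensional ℝ V] [MeasurableSpace V] [BorelSpace V]

lemma integrable_exp_neg_mul_sq_norm (hb : 0 < b) :
    Integrable fun v : V => Real.exp (-b * ‖v‖ ^ 2) :=
  .of_integral_ne_zero <| by
    rw [GaussianFourier.integral_rexp_neg_mul_sq_norm hb]
    positivity

lemma integrable_norm_pow_mul_exp_neg_mul_sq_norm (hb : 0 < b) (n : ℕ) :
    Integrable fun v : V => ‖v‖ ^ n * Real.exp (-b * ‖v‖ ^ 2) := by
  refine integrable_mul_of_norm_le_mul_weight (M := n.factorial * Real.exp (1 / (4 * (b / 2))))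
    (fun v => Real.exp_pos (b / 2 * ‖v‖ ^ 2)) (by fun_prop) (by fun_prop) (fun v => ?_) ?_
  · rw [norm_pow, norm_norm]
    exact pow_le_mul_exp_mul_sq (half_pos hb) (norm_nonneg v) n
  · refine (integrable_exp_neg_mul_sq_norm (half_pos hb)).congr (.of_forall fun v => ?_)
    simp only [← Real.exp_add]
    ring_nf

lemma integrable_exp_inner_mul_exp_neg_mul_sq_norm (hb : 0 < b) (y : V) :
    Integrable fun v : V => Real.exp ⟪v, y⟫ * Real.exp (-b * ‖v‖ ^ 2) := by
  simp only [exp_inner_mul_exp_neg_mul_sq_norm hb.ne']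
  exact ((integrable_exp_neg_mul_sq_norm hb).comp_sub_right _).const_mul _

lemma integral_exp_inner_mul_exp_neg_mul_sq_norm (hb : b ≠ 0) (y : V) :
    ∫ v : V, Real.exp ⟪v, y⟫ * Real.exp (-b * ‖v‖ ^ 2) =
      Real.exp (‖y‖ ^ 2 / (4 * b)) * ∫ v : V, Real.exp (-b * ‖v‖ ^ 2) := by
  simp only [exp_inner_mul_exp_neg_mul_sq_norm hb]
  rw [integral_const_mul, integral_sub_right_eq_self (fun v : V => Real.exp (-b * ‖v‖ ^ 2))]

lemma integrable_exp_abs_inner_mul_exp_neg_mul_sq_norm (hb : 0 < b) (y : V) :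
    Integrable fun v : V => Real.exp |⟪v, y⟫| * Real.exp (-b * ‖v‖ ^ 2) :=
  ((integrable_exp_inner_mul_exp_neg_mul_sq_norm hb y).add
    (integrable_exp_inner_mul_exp_neg_mul_sq_norm hb (-y))).mono' (by fun_prop) <|
      .of_forall fun v => by
        rw [Real.norm_of_nonneg (by positivity)]
        exact exp_abs_inner_mul_exp_neg_mul_sq_norm_le b v y

lemma integral_exp_abs_inner_mul_exp_neg_mul_sq_norm_le (hb : 0 < b) (y : V) :
    ∫ v : V, Real.exp |⟪v, y⟫| * Real.exp (-b * ‖v‖ ^ 2) ≤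
      2 * (∫ v : V, Real.exp (-b * ‖v‖ ^ 2)) * Real.exp (‖y‖ ^ 2 / (4 * b)) := by
  have hint := integrable_exp_inner_mul_exp_neg_mul_sq_norm (V := V) hb
  calc ∫ v : V, Real.exp |⟪v, y⟫| * Real.exp (-b * ‖v‖ ^ 2)
      ≤ ∫ v : V, (Real.exp ⟪v, y⟫ * Real.exp (-b * ‖v‖ ^ 2) +
          Real.exp ⟪v, -y⟫ * Real.exp (-b * ‖v‖ ^ 2)) :=
        integral_mono (integrable_exp_abs_inner_mul_exp_neg_mul_sq_norm hb y)
          ((hint y).add (hint (-y))) fun v => exp_abs_inner_mul_exp_neg_mul_sq_norm_le b v y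
    _ = 2 * (∫ v : V, Real.exp (-b * ‖v‖ ^ 2)) * Real.exp (‖y‖ ^ 2 / (4 * b)) := by
        rw [integral_add (hint y) (hint (-y)),
          integral_exp_inner_mul_exp_neg_mul_sq_norm hb.ne',
          integral_exp_inner_mul_exp_neg_mul_sq_norm hb.ne', norm_neg]
        ring

lemma integrable_exp_mul_of_abs_le_gaussian {C t₀ t : ℝ} (ht₀ : 0 < t₀) (ht : t₀ < t)
    {u : V → ℝ} (hmeas : AEStronglyMeasurable u)
    (hbound : ∀ᵐ y, |u y| ≤ C * Real.exp (-‖y‖ ^ 2 / (4 * t₀))) :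
    Integrable fun y => Real.exp (‖y‖ ^ 2 / (4 * t)) * u y := by
  have hrate : 0 < 1 / (4 * t₀) - 1 / (4 * t) := sub_pos.2 (by gcongr)
  refine ((integrable_exp_neg_mul_sq_norm hrate).const_mul C).mono' (by fun_prop) ?_
  filter_upwards [hbound] with y hy
  calc ‖Real.exp (‖y‖ ^ 2 / (4 * t)) * u y‖
      = Real.exp (‖y‖ ^ 2 / (4 * t)) * |u y| := by
        rw [norm_mul, Real.norm_of_nonneg (Real.exp_nonneg _), Real.norm_eq_abs]
    _ ≤ Real.exp (‖y‖ ^ 2 / (4 * t)) * (C * Real.exp (-‖y‖ ^ 2 / (4 * t₀))) := by gcongr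
    _ = C * Real.exp (-(1 / (4 * t₀) - 1 / (4 * t)) * ‖y‖ ^ 2) := by
        rw [mul_left_comm, ← Real.exp_add]
        ring_nf

end Gaussian

section ExpTail

/-- The remainder of the exponential series at `s` after its first `n` terms; it dominates the
remainder at every complex number of modulus `s`. -/
def expTail (n : ℕ) (s : ℝ) : ℝ :=
  Real.exp s - ∑ m ∈ Finset.range n, s ^ m / m.factorial

lemma expTail_nonneg (n : ℕ) {s : ℝ} (hs : 0 ≤ s) : 0 ≤ expTail n s :=
  sub_nonneg.2 (Real.sum_le_exp_of_nonneg hs n)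

lemma expTail_le_exp (n : ℕ) {s : ℝ} (hs : 0 ≤ s) : expTail n s ≤ Real.exp s :=
  sub_le_self _ (Finset.sum_nonneg fun _ _ => by positivity)

lemma norm_expTail_mul_le (n : ℕ) {s a : ℝ} (hs : 0 ≤ s) (ha : 0 ≤ a) :
    ‖expTail n s * a‖ ≤ Real.exp s * a := by
  rw [Real.norm_of_nonneg (mul_nonneg (expTail_nonneg n hs) ha)]
  gcongr
  exact expTail_le_exp n hs

@[fun_prop]
lemma continuous_expTail (n : ℕ) : Continuous (expTail n) := by
  unfold expTail
  fun_prop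

lemma tendsto_expTail (s : ℝ) : Tendsto (fun n => expTail n s) atTop (nhds 0) := by
  have h := (NormedSpace.expSeries_div_hasSum_exp s).tendsto_sum_nat
  rw [← Real.exp_eq_exp_ℝ] at h
  simpa only [expTail, sub_self] using h.const_sub (Real.exp s)

lemma norm_exp_two_pi_I_mul_sub_sum_le (n : ℕ) (r : ℝ) :
    ‖Complex.exp (2 * π * Complex.I * r) -
      ∑ j ∈ Finset.range n, (2 * π * Complex.I * r) ^ j / (j.factorial : ℂ)‖ ≤
      expTail n (2 * π * |r|) := by
  have hnorm : ‖2 * π * Complex.I * r‖ = 2 * π * |r| := by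
    simp [abs_of_pos Real.pi_pos]
  rw [expTail, ← hnorm]
  exact Complex.norm_exp_sub_sum_le_exp_norm_sub_sum _ n

end ExpTail

section HeatTail

open scoped RealInnerProductSpace

variable {V : Type*} [NormedAddCommGroup V] [InnerProductSpace ℝ V] [FiniteDimensional ℝ V]
  [MeasurableSpace V] [BorelSpace V] {t : ℝ}

/-- A bound, uniform in `x`, for the error at `y` of the Taylor polynomial of degree less than `n`
of `y ↦ G(x - y, t)`: the tail of the series of `exp (2πi⟪v, y⟫)`, integrated over the frequency `v`
against the Fourier transform `exp (-4π²t‖v‖²)` of the heat kernel. -/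
def heatTail (t : ℝ) (n : ℕ) (y : V) : ℝ :=
  ∫ v : V, expTail n (2 * π * |⟪v, y⟫|) * Real.exp (-(4 * π ^ 2 * t) * ‖v‖ ^ 2)

lemma integrable_exp_two_pi_abs_inner_mul_exp (ht : 0 < t) (y : V) :
    Integrable fun v : V =>
      Real.exp (2 * π * |⟪v, y⟫|) * Real.exp (-(4 * π ^ 2 * t) * ‖v‖ ^ 2) := by
  simpa only [inner_smul_right, abs_mul, abs_of_pos Real.two_pi_pos] using
    integrable_exp_abs_inner_mul_exp_neg_mul_sq_norm (b := 4 * π ^ 2 * t) (by positivity)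
      ((2 * π) • y)

lemma norm_heatTail_le (ht : 0 < t) (n : ℕ) (y : V) :
    ‖heatTail t n y‖ ≤ 2 * (∫ v : V, Real.exp (-(4 * π ^ 2 * t) * ‖v‖ ^ 2)) *
      Real.exp (‖y‖ ^ 2 / (4 * t)) := by
  refine (norm_integral_le_of_norm_le (integrable_exp_two_pi_abs_inner_mul_exp ht y)
    (.of_forall fun v => norm_expTail_mul_le n (by positivity) (by positivity))).trans ?_
  have h := integral_exp_abs_inner_mul_exp_neg_mul_sq_norm_le (b := 4 * π ^ 2 * t)
    (by positivity) ((2 * π) • y)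
  have hexponent : (2 * π * ‖y‖) ^ 2 / (4 * (4 * π ^ 2 * t)) = ‖y‖ ^ 2 / (4 * t) := by
    field_simp
    ring
  simpa only [inner_smul_right, abs_mul, norm_smul, Real.norm_eq_abs, abs_of_pos Real.two_pi_pos,
    hexponent] using h

lemma tendsto_heatTail (ht : 0 < t) (y : V) :
    Tendsto (fun n => heatTail t n y) atTop (nhds 0) := by
  simpa only [heatTail, zero_mul, integral_zero] using tendsto_integral_of_dominated_convergence _
    (fun n => (by fun_prop : Continuous fun v : V => expTail n (2 * π * |⟪v, y⟫|) *
      Real.exp (-(4 * π ^ 2 * t) * ‖v‖ ^ 2)).aestronglyMeasurable)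
    (integrable_exp_two_pi_abs_inner_mul_exp ht y)
    (fun n => .of_forall fun v => norm_expTail_mul_le n (by positivity) (by positivity))
    (.of_forall fun v => (tendsto_expTail (2 * π * |⟪v, y⟫|)).mul_const _)

lemma stronglyMeasurable_heatTail (t : ℝ) (n : ℕ) :
    StronglyMeasurable (heatTail (V := V) t n) :=
  StronglyMeasurable.integral_prod_right' (f := fun p : V × V =>
      expTail n (2 * π * |⟪p.2, p.1⟫|) * Real.exp (-(4 * π ^ 2 * t) * ‖p.2‖ ^ 2))
    (by fun_prop : Continuous _).stronglyMeasurable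

variable {μ : Measure V} {f : V → ℝ}

lemma integrable_heatTail_mul (ht : 0 < t)
    (hf : Integrable (fun y => Real.exp (‖y‖ ^ 2 / (4 * t)) * f y) μ) (n : ℕ) :
    Integrable (fun y => heatTail t n y * f y) μ :=
  integrable_mul_of_norm_le_mul_weight (fun _ => Real.exp_pos _)
    (by fun_prop : Continuous _).aestronglyMeasurable
    (stronglyMeasurable_heatTail t n).aestronglyMeasurable (norm_heatTail_le ht n) hf

lemma tendsto_integral_heatTail_mul (ht : 0 < t)
    (hf : Integrable (fun y => Real.exp (‖y‖ ^ 2 / (4 * t)) * f y) μ) :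
    Tendsto (fun n => ∫ y, heatTail t n y * f y ∂μ) atTop (nhds 0) := by
  have hbound (n : ℕ) (y : V) : ‖heatTail t n y * f y‖ ≤
      2 * (∫ v : V, Real.exp (-(4 * π ^ 2 * t) * ‖v‖ ^ 2)) *
        ‖Real.exp (‖y‖ ^ 2 / (4 * t)) * f y‖ := by
    rw [norm_mul, norm_mul, ← mul_assoc, Real.norm_of_nonneg (Real.exp_nonneg _)]
    gcongr
    exact norm_heatTail_le ht n y
  simpa only [zero_mul, integral_zero] using tendsto_integral_of_dominated_convergence _
    (fun n => (integrable_heatTail_mul ht hf n).aestronglyMeasurable) (hf.norm.const_mul _)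
    (fun n => .of_forall (hbound n)) (.of_forall fun y => (tendsto_heatTail ht y).mul_const (f y))

end HeatTail

section MultiIndex

lemma abs_prod_pow_le_norm_pow {ι : Type*} [Fintype ι] (α : ι → ℕ) (v : EuclideanSpace ℝ ι) :
    |∏ i, v i ^ α i| ≤ ‖v‖ ^ ∑ i, α i := by
  rw [Finset.abs_prod, ← Finset.prod_pow_eq_pow_sum]
  gcongr with i
  rw [abs_pow]
  gcongr
  exact PiLp.norm_apply_le v i

lemma sum_antidiagonalTuple_prod_pow_div_factorial {K : Type*} [Field K] [CharZero K] {d : ℕ}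
    (j : ℕ) (z : Fin d → K) :
    ∑ α ∈ Finset.Nat.antidiagonalTuple d j, (∏ i, z i ^ α i) / ∏ i, ((α i).factorial : K) =
      (∑ i, z i) ^ j / j.factorial := by
  rw [Finset.sum_pow_eq_sum_piAntidiag, Finset.piAntidiag_univ_fin_eq_antidiagonalTuple,
    Finset.sum_div]
  refine Finset.sum_congr rfl fun α hα => ?_
  have hspec : (∏ i, ((α i).factorial : K)) * Nat.multinomial Finset.univ α = j.factorial := by
    rw [← (Finset.Nat.mem_antidiagonalTuple.1 hα : ∑ i, α i = j)]
    exact_mod_cast Nat.multinomial_spec Finset.univ α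
  have hprod : ∏ i, ((α i).factorial : K) ≠ 0 :=
    Finset.prod_ne_zero_iff.2 fun i _ => Nat.cast_ne_zero.2 (α i).factorial_ne_zero
  have hj : (j.factorial : K) ≠ 0 := Nat.cast_ne_zero.2 j.factorial_ne_zero
  rw [div_eq_div_iff hprod hj, ← hspec]
  ring

variable {d : ℕ} {F : (Fin d → ℕ) → EuclideanSpace ℝ (Fin d) → ℝ}

lemma iterate_pd_eq (hF : ∀ i α, pd d i (F α) = F (α + Pi.single i 1)) (i : Fin d) (n : ℕ)
    (α : Fin d → ℕ) : (pd d i)^[n] (F α) = F (α + Pi.single i n) := by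
  induction n with
  | zero => simp
  | succ n ih => rw [Function.iterate_succ_apply', ih, hF, add_assoc, ← Pi.single_add]

lemma Dmul_eq (hF : ∀ i α, pd d i (F α) = F (α + Pi.single i 1)) (α : Fin d → ℕ) :
    Dmul d α (F 0) = F α := by
  have hlist (l : List (Fin d)) : (l.map fun i => (pd d i)^[α i]).foldr (· ∘ ·) id (F 0) =
      F (l.map fun i => Pi.single i (α i)).sum := by
    induction l with
    | nil => simp
    | cons i l ih =>
      simp only [List.map_cons, List.foldr_cons, Function.comp_apply, List.sum_cons, ih]
      rw [iterate_pd_eq hF, add_comm]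
  rw [Dmul, hlist, ← List.ofFn_eq_map, List.sum_ofFn, Finset.univ_sum_single]

end MultiIndex

section Fourier

open scoped FourierTransform RealInnerProductSpace

variable {V : Type*} [NormedAddCommGroup V] [InnerProductSpace ℝ V] [FiniteDimensional ℝ V]
  [MeasurableSpace V] [BorelSpace V]

lemma fourier_sum_const_mul {ι : Type*} (s : Finset ι) (c : ι → ℂ) {f : ι → V → ℂ}
    (hf : ∀ i ∈ s, Integrable (f i)) (x : V) :
    𝓕 (fun v => ∑ i ∈ s, c i * f i v) x = ∑ i ∈ s, c i * 𝓕 (f i) x := by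
  simp only [Real.fourier_eq, Finset.smul_sum, ← integral_const_mul, ← mul_smul_comm]
  exact integral_finsetSum s fun i hi =>
    ((Real.fourierIntegral_convergent_iff x).2 (hf i hi)).const_mul (c i)

lemma norm_fourier_sub_fourier_le {E : Type*} [NormedAddCommGroup E] [NormedSpace ℂ E]
    {f g : V → E} (hf : Integrable f) (hg : Integrable g) (x : V) :
    ‖𝓕 f x - 𝓕 g x‖ ≤ ∫ v, ‖f v - g v‖ := by
  rw [Real.fourier_eq, Real.fourier_eq,
    ← integral_sub ((Real.fourierIntegral_convergent_iff x).2 hf)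
      ((Real.fourierIntegral_convergent_iff x).2 hg)]
  simp only [← smul_sub]
  exact (norm_integral_le_integral_norm _).trans_eq (by simp only [Circle.norm_smul])

lemma fourier_apply_sub (f : V → ℂ) (x y : V) :
    𝓕 f (x - y) = 𝓕 (fun v => Complex.exp (2 * π * Complex.I * ⟪v, y⟫) * f v) x := by
  simp only [Real.fourier_eq', smul_eq_mul, ← mul_assoc, ← Complex.exp_add, inner_sub_right]
  congr! 4
  push_cast
  ring

end Fourier

section FourierDerivative

open scoped FourierTransform RealInnerProductSpace

variable {d : ℕ} {f : EuclideanSpace ℝ (Fin d) → ℂ}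

/-- The Fourier symbol `(-2πi v)^α` of `D^α`, for functions represented as `𝓕 f`. -/
def derivSymbol (α : Fin d → ℕ) (v : EuclideanSpace ℝ (Fin d)) : ℂ :=
  ∏ i, (-(2 * π * Complex.I) * v i) ^ α i

lemma derivSymbol_zero (v : EuclideanSpace ℝ (Fin d)) : derivSymbol 0 v = 1 := by
  simp [derivSymbol]

lemma derivSymbol_add_single (α : Fin d → ℕ) (i : Fin d) (v : EuclideanSpace ℝ (Fin d)) :
    derivSymbol (α + Pi.single i 1) v = -(2 * π * Complex.I) * v i * derivSymbol α v := by
  simp only [derivSymbol, Pi.add_apply, pow_add, Finset.prod_mul_distrib]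
  rw [mul_comm, Finset.prod_eq_single i (fun j _ hj => by simp [hj]) (by simp)]
  simp

lemma norm_derivSymbol_le (α : Fin d → ℕ) (v : EuclideanSpace ℝ (Fin d)) :
    ‖derivSymbol α v‖ ≤ (2 * π) ^ (∑ i, α i) * ‖v‖ ^ ∑ i, α i := by
  have hnorm : ‖derivSymbol α v‖ = (2 * π) ^ (∑ i, α i) * |∏ i, v i ^ α i| := by
    simp [derivSymbol, mul_pow, Finset.prod_mul_distrib, Finset.prod_pow_eq_pow_sum,
      Finset.abs_prod, abs_of_pos Real.pi_pos]
  rw [hnorm]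
  gcongr
  exact abs_prod_pow_le_norm_pow α v

@[fun_prop]
lemma continuous_derivSymbol (α : Fin d → ℕ) : Continuous (derivSymbol α) := by
  unfold derivSymbol
  fun_prop

lemma integrable_norm_pow_mul_derivSymbol_mul (hfm : AEStronglyMeasurable f)
    (hf : ∀ n : ℕ, Integrable fun v => ‖v‖ ^ n * ‖f v‖) (α : Fin d → ℕ) (n : ℕ) :
    Integrable fun v => ‖v‖ ^ n * ‖derivSymbol α v * f v‖ := by
  refine ((hf (n + ∑ i, α i)).const_mul ((2 * π) ^ ∑ i, α i)).mono' (by fun_prop)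
    (.of_forall fun v => ?_)
  rw [Real.norm_of_nonneg (by positivity), norm_mul]
  calc ‖v‖ ^ n * (‖derivSymbol α v‖ * ‖f v‖)
      ≤ ‖v‖ ^ n * ((2 * π) ^ (∑ i, α i) * ‖v‖ ^ (∑ i, α i) * ‖f v‖) := by
        gcongr
        exact norm_derivSymbol_le α v
    _ = (2 * π) ^ (∑ i, α i) * (‖v‖ ^ (n + ∑ i, α i) * ‖f v‖) := by ring

lemma integrable_derivSymbol_mul (hfm : AEStronglyMeasurable f)
    (hf : ∀ n : ℕ, Integrable fun v => ‖v‖ ^ n * ‖f v‖) (α : Fin d → ℕ) :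
    Integrable fun v => derivSymbol α v * f v := by
  refine (integrable_norm_iff (by fun_prop)).1 ?_
  simpa only [pow_zero, one_mul] using integrable_norm_pow_mul_derivSymbol_mul hfm hf α 0

lemma pd_re_fourier (hf : Integrable f) (hvf : Integrable fun v => ‖v‖ * ‖f v‖) (i : Fin d) :
    pd d i (fun x => (𝓕 f x).re) =
      fun x => (𝓕 (fun v => -(2 * π * Complex.I) * v i * f v) x).re := by
  funext x
  have hderiv : HasFDerivAt (fun x => (𝓕 f x).re) _ x :=
    Complex.reCLM.hasFDerivAt.comp x (Real.hasFDerivAt_fourier hf hvf x)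
  have hint : Integrable (VectorFourier.fourierSMulRight (innerSL ℝ) f) :=
    (hvf.const_mul (2 * π * ‖innerSL ℝ (E := EuclideanSpace ℝ (Fin d))‖)).mono'
      hf.1.fourierSMulRight <| .of_forall fun v =>
        (VectorFourier.norm_fourierSMulRight_le _ _ v).trans_eq (mul_assoc _ _ _)
  have hdir (v : EuclideanSpace ℝ (Fin d)) :
      VectorFourier.fourierSMulRight (innerSL ℝ) f v (EuclideanSpace.single i 1) =
        -(2 * π * Complex.I) * v i * f v := by
    simp [VectorFourier.fourierSMulRight_apply, innerSL_apply_apply ℝ,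
      EuclideanSpace.inner_single_right, mul_assoc]
  rw [pd, hderiv.fderiv, ContinuousLinearMap.comp_apply, Complex.reCLM_apply,
    Real.fourier_continuousLinearMap_apply hint]
  simp only [hdir]

lemma Dmul_re_fourier (hfm : AEStronglyMeasurable f)
    (hf : ∀ n : ℕ, Integrable fun v => ‖v‖ ^ n * ‖f v‖) (α : Fin d → ℕ) :
    Dmul d α (fun x => (𝓕 f x).re) =
      fun x => (𝓕 (fun v => derivSymbol α v * f v) x).re := by
  have hpd (i : Fin d) (α : Fin d → ℕ) :
      pd d i (fun x => (𝓕 (fun v => derivSymbol α v * f v) x).re) =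
        fun x => (𝓕 (fun v => derivSymbol (α + Pi.single i 1) v * f v) x).re := by
    simp only [derivSymbol_add_single, mul_assoc _ (derivSymbol α _)]
    refine pd_re_fourier (integrable_derivSymbol_mul hfm hf α) ?_ i
    simpa only [pow_one] using integrable_norm_pow_mul_derivSymbol_mul hfm hf α 1
  simpa only [derivSymbol_zero, one_mul] using
    Dmul_eq (F := fun α x => (𝓕 (fun v => derivSymbol α v * f v) x).re) hpd α

end FourierDerivative

section Taylor

open scoped FourierTransform RealInnerProductSpace

variable {d : ℕ} {f : EuclideanSpace ℝ (Fin d) → ℂ}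

/-- The coefficient `(-y)^α / α!` of `D^α F x` in the Taylor expansion of `F (x - y)` in `y`. -/
def taylorCoeff (α : Fin d → ℕ) (y : EuclideanSpace ℝ (Fin d)) : ℝ :=
  (-1 : ℝ) ^ (∑ i, α i) / (∏ i, ((α i).factorial : ℝ)) * ∏ i, y i ^ α i

/-- The Taylor polynomial of order `k` of `y ↦ F (x - y)` at `y = 0`. -/
def taylorPoly (k : ℕ) (F : EuclideanSpace ℝ (Fin d) → ℝ) (x y : EuclideanSpace ℝ (Fin d)) : ℝ :=
  ∑ j ∈ Finset.range (k + 1), ∑ α ∈ Finset.Nat.antidiagonalTuple d j,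
    taylorCoeff α y * Dmul d α F x

lemma sum_taylorCoeff_mul_derivSymbol (j : ℕ) (y v : EuclideanSpace ℝ (Fin d)) :
    ∑ α ∈ Finset.Nat.antidiagonalTuple d j, (taylorCoeff α y : ℂ) * derivSymbol α v =
      (2 * π * Complex.I * ⟪v, y⟫) ^ j / j.factorial := by
  have hinner : 2 * π * Complex.I * (⟪v, y⟫ : ℝ) =
      ∑ i, -(y i : ℂ) * (-(2 * π * Complex.I) * v i) := by
    rw [PiLp.inner_apply, Complex.ofReal_sum, Finset.mul_sum]
    refine Finset.sum_congr rfl fun i _ => ?_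
    simp only [RCLike.inner_apply, conj_trivial, Complex.ofReal_mul]
    ring
  rw [hinner, ← sum_antidiagonalTuple_prod_pow_div_factorial]
  refine Finset.sum_congr rfl fun α _ => ?_
  simp only [taylorCoeff, derivSymbol, mul_pow, neg_pow (y _ : ℂ), Finset.prod_mul_distrib,
    Finset.prod_pow_eq_pow_sum]
  push_cast
  ring

lemma sum_range_pow_div_factorial_mul_eq (k : ℕ) (y v : EuclideanSpace ℝ (Fin d)) (z : ℂ) :
    (∑ j ∈ Finset.range (k + 1), (2 * π * Complex.I * ⟪v, y⟫) ^ j / (j.factorial : ℂ)) * z =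
      ∑ p ∈ (Finset.range (k + 1)).sigma fun j => Finset.Nat.antidiagonalTuple d j,
        (taylorCoeff p.2 y : ℂ) * (derivSymbol p.2 v * z) := by
  simp only [← sum_taylorCoeff_mul_derivSymbol, Finset.sum_sigma, Finset.sum_mul, ← mul_assoc]

lemma integrable_sum_range_pow_div_factorial_mul (hfm : AEStronglyMeasurable f)
    (hf : ∀ n : ℕ, Integrable fun v => ‖v‖ ^ n * ‖f v‖) (k : ℕ)
    (y : EuclideanSpace ℝ (Fin d)) :
    Integrable fun v => (∑ j ∈ Finset.range (k + 1),
      (2 * π * Complex.I * ⟪v, y⟫) ^ j / (j.factorial : ℂ)) * f v := by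
  simp only [sum_range_pow_div_factorial_mul_eq]
  exact integrable_finsetSum _ fun p _ => (integrable_derivSymbol_mul hfm hf p.2).const_mul _

lemma taylorPoly_re_fourier (hfm : AEStronglyMeasurable f)
    (hf : ∀ n : ℕ, Integrable fun v => ‖v‖ ^ n * ‖f v‖) (k : ℕ)
    (x y : EuclideanSpace ℝ (Fin d)) :
    taylorPoly k (fun x => (𝓕 f x).re) x y =
      (𝓕 (fun v => (∑ j ∈ Finset.range (k + 1),
        (2 * π * Complex.I * ⟪v, y⟫) ^ j / (j.factorial : ℂ)) * f v) x).re := by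
  simp only [sum_range_pow_div_factorial_mul_eq]
  rw [fourier_sum_const_mul _ _ fun p _ => integrable_derivSymbol_mul hfm hf p.2]
  simp only [taylorPoly, Dmul_re_fourier hfm hf, Finset.sum_sigma, Complex.re_sum,
    Complex.re_ofReal_mul]

lemma abs_re_fourier_sub_taylorPoly_le (hfm : AEStronglyMeasurable f)
    (hf : ∀ n : ℕ, Integrable fun v => ‖v‖ ^ n * ‖f v‖) {y : EuclideanSpace ℝ (Fin d)}
    (hexp : Integrable fun v => Real.exp (2 * π * |⟪v, y⟫|) * ‖f v‖) (k : ℕ)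
    (x : EuclideanSpace ℝ (Fin d)) :
    |(𝓕 f (x - y)).re - taylorPoly k (fun x => (𝓕 f x).re) x y| ≤
      ∫ v, expTail (k + 1) (2 * π * |⟪v, y⟫|) * ‖f v‖ := by
  have hint : Integrable f := (integrable_norm_iff hfm).1 (by simpa using hf 0)
  have hmod : Integrable fun v => Complex.exp (2 * π * Complex.I * ⟪v, y⟫) * f v :=
    hint.bdd_mul (c := 1) (by fun_prop) (.of_forall fun v => by simp [Complex.norm_exp])
  have htail : Integrable fun v => expTail (k + 1) (2 * π * |⟪v, y⟫|) * ‖f v‖ :=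
    hexp.mono' (by fun_prop) <| .of_forall fun v =>
      norm_expTail_mul_le (k + 1) (by positivity) (norm_nonneg _)
  rw [taylorPoly_re_fourier hfm hf, fourier_apply_sub, ← Complex.sub_re]
  refine (Complex.abs_re_le_norm _).trans <| (norm_fourier_sub_fourier_le hmod
    (integrable_sum_range_pow_div_factorial_mul hfm hf k y) x).trans ?_
  refine integral_mono_of_nonneg (.of_forall fun v => norm_nonneg _) htail
    (.of_forall fun v => ?_)
  simp only [← sub_mul, norm_mul]
  gcongr
  exact norm_exp_two_pi_I_mul_sub_sum_le (k + 1) ⟪v, y⟫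

end Taylor

section HeatKernel

open scoped FourierTransform RealInnerProductSpace

variable {d : ℕ} {t : ℝ}

lemma heatKernel_eq_re_fourier (ht : 0 < t) (x : EuclideanSpace ℝ (Fin d)) :
    heatKernel d x t = (𝓕 (fun v : EuclideanSpace ℝ (Fin d) =>
      (Real.exp (-(4 * π ^ 2 * t) * ‖v‖ ^ 2) : ℂ)) x).re := by
  have hb : 0 < ((4 * π ^ 2 * t : ℝ) : ℂ).re := by
    rw [Complex.ofReal_re]
    positivity
  have hgauss := fourier_gaussian_innerProductSpace hb x
  have hbase : (π : ℂ) / (4 * π ^ 2 * t : ℝ) = ((4 * π * t)⁻¹ : ℝ) := by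
    norm_cast
    field_simp
  have hexponent :
      -π ^ 2 * ‖x‖ ^ 2 / ((4 * π ^ 2 * t : ℝ) : ℂ) = (-‖x‖ ^ 2 / (4 * t) : ℝ) := by
    norm_cast
    field_simp
  have hdim : (Module.finrank ℝ (EuclideanSpace ℝ (Fin d)) : ℂ) / 2 = ((d : ℝ) / 2 : ℝ) := by
    simp
  have hcast : (fun v : EuclideanSpace ℝ (Fin d) =>
      (Real.exp (-(4 * π ^ 2 * t) * ‖v‖ ^ 2) : ℂ)) =
        fun v => Complex.exp (-((4 * π ^ 2 * t : ℝ) : ℂ) * ‖v‖ ^ 2) := by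
    ext v
    push_cast
    rfl
  rw [hcast, hgauss, hbase, hexponent, hdim, ← Complex.ofReal_cpow (by positivity),
    ← Complex.ofReal_exp, ← Complex.ofReal_mul, Complex.ofReal_re, Real.inv_rpow (by positivity),
    ← Real.rpow_neg (by positivity), ← neg_div, heatKernel]

lemma abs_heatKernel_sub_taylorPoly_le (ht : 0 < t) (k : ℕ) (x y : EuclideanSpace ℝ (Fin d)) :
    |heatKernel d (x - y) t - taylorPoly k (fun z => heatKernel d z t) x y| ≤
      heatTail t (k + 1) y := by
  have hb : 0 < 4 * π ^ 2 * t := by positivity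
  have hnorm (v : EuclideanSpace ℝ (Fin d)) :
      ‖(Real.exp (-(4 * π ^ 2 * t) * ‖v‖ ^ 2) : ℂ)‖ =
        Real.exp (-(4 * π ^ 2 * t) * ‖v‖ ^ 2) :=
    Complex.norm_of_nonneg (Real.exp_nonneg _)
  have h := abs_re_fourier_sub_taylorPoly_le (d := d)
    (f := fun v => (Real.exp (-(4 * π ^ 2 * t) * ‖v‖ ^ 2) : ℂ)) (by fun_prop)
    (by simpa only [hnorm] using integrable_norm_pow_mul_exp_neg_mul_sq_norm hb)
    (by simpa only [hnorm] using integrable_exp_two_pi_abs_inner_mul_exp ht y) k x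
  simpa only [hnorm, heatTail, ← heatKernel_eq_re_fourier ht] using h

lemma norm_heatKernel_sub_le (ht : 0 < t) (x y : EuclideanSpace ℝ (Fin d)) :
    ‖heatKernel d (x - y) t‖ ≤
      (4 * π * t) ^ (-(d : ℝ) / 2) * Real.exp (‖y‖ ^ 2 / (4 * t)) := by
  rw [heatKernel, Real.norm_of_nonneg (by positivity)]
  gcongr
  exact (neg_nonpos.2 (sq_nonneg _)).trans (sq_nonneg _)

end HeatKernel

section HeatApprox

variable {d : ℕ} {t : ℝ} {u : EuclideanSpace ℝ (Fin d) → ℝ}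

lemma integrable_heatKernel_sub_mul (ht : 0 < t)
    (hu : Integrable fun y => Real.exp (‖y‖ ^ 2 / (4 * t)) * u y)
    (x : EuclideanSpace ℝ (Fin d)) : Integrable fun y => heatKernel d (x - y) t * u y := by
  refine integrable_mul_of_norm_le_mul_weight (fun y => Real.exp_pos _) (by fun_prop) ?_
    (norm_heatKernel_sub_le ht x) hu
  unfold heatKernel
  fun_prop

lemma integrable_prod_pow_mul (ht : 0 < t)
    (hu : Integrable fun y => Real.exp (‖y‖ ^ 2 / (4 * t)) * u y) (α : Fin d → ℕ) :
    Integrable fun y => (∏ i, y i ^ α i) * u y := by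
  have hc : 0 < (4 * t)⁻¹ := by positivity
  simp only [div_eq_inv_mul] at hu
  exact integrable_mul_of_norm_le_mul_weight (fun y => Real.exp_pos _) (by fun_prop)
    (by fun_prop) (fun y => (abs_prod_pow_le_norm_pow α y).trans
      (pow_le_mul_exp_mul_sq hc (norm_nonneg y) _)) hu

lemma taylorPoly_mul_eq_sum (k : ℕ) (F u : EuclideanSpace ℝ (Fin d) → ℝ)
    (x y : EuclideanSpace ℝ (Fin d)) :
    taylorPoly k F x y * u y =
      ∑ j ∈ Finset.range (k + 1), ∑ α ∈ Finset.Nat.antidiagonalTuple d j,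
        (-1 : ℝ) ^ (∑ i, α i) / (∏ i, ((α i).factorial : ℝ)) * ((∏ i, y i ^ α i) * u y) *
          Dmul d α F x := by
  simp only [taylorPoly, taylorCoeff, Finset.sum_mul]
  refine Finset.sum_congr rfl fun j _ => Finset.sum_congr rfl fun α _ => ?_
  ring

lemma integrable_taylorPoly_mul (hu : ∀ α : Fin d → ℕ, Integrable fun y => (∏ i, y i ^ α i) * u y)
    (k : ℕ) (F : EuclideanSpace ℝ (Fin d) → ℝ) (x : EuclideanSpace ℝ (Fin d)) :
    Integrable fun y => taylorPoly k F x y * u y := by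
  simp only [taylorPoly_mul_eq_sum]
  exact integrable_finsetSum _ fun j _ => integrable_finsetSum _ fun α _ =>
    ((hu α).const_mul _).mul_const _

lemma integral_taylorPoly_heatKernel_mul
    (hu : ∀ α : Fin d → ℕ, Integrable fun y => (∏ i, y i ^ α i) * u y) (k : ℕ)
    (x : EuclideanSpace ℝ (Fin d)) (t : ℝ) :
    ∫ y, taylorPoly k (fun z => heatKernel d z t) x y * u y = heatApprox d k u x t := by
  have hterm (α : Fin d → ℕ) : Integrable fun y => (-1 : ℝ) ^ (∑ i, α i) /
      (∏ i, ((α i).factorial : ℝ)) * ((∏ i, y i ^ α i) * u y) *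
        Dmul d α (fun z => heatKernel d z t) x :=
    ((hu α).const_mul _).mul_const _
  simp only [taylorPoly_mul_eq_sum, heatApprox]
  rw [integral_finsetSum _ fun j _ => integrable_finsetSum _ fun α _ => hterm α]
  refine Finset.sum_congr rfl fun j _ => ?_
  rw [integral_finsetSum _ fun α _ => hterm α]
  simp only [integral_mul_const, integral_const_mul]

lemma abs_integral_sub_heatApprox_le (ht : 0 < t)
    (hu : Integrable fun y => Real.exp (‖y‖ ^ 2 / (4 * t)) * u y) (k : ℕ)
    (x : EuclideanSpace ℝ (Fin d)) :
    |(∫ y, heatKernel d (x - y) t * u y) - heatApprox d k u x t| ≤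
      ∫ y, heatTail t (k + 1) y * |u y| := by
  have hmoment := integrable_prod_pow_mul ht hu
  rw [← integral_taylorPoly_heatKernel_mul hmoment, ← integral_sub
    (integrable_heatKernel_sub_mul ht hu x) (integrable_taylorPoly_mul hmoment k _ x),
    ← Real.norm_eq_abs]
  have htail := integrable_heatTail_mul ht
    (integrable_mul_abs (fun _ => Real.exp_nonneg _) hu) (k + 1)
  refine norm_integral_le_of_norm_le htail (.of_forall fun y => ?_)
  rw [← sub_mul, Real.norm_eq_abs, abs_mul]
  gcongr
  exact abs_heatKernel_sub_taylorPoly_le ht k x y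

end HeatApprox

theorem stmt_9_general (d : ℕ) {t : ℝ} (ht : 0 < t) {u₀ : EuclideanSpace ℝ (Fin d) → ℝ}
    (hu₀ : Integrable fun y => Real.exp (‖y‖ ^ 2 / (4 * t)) * u₀ y) :
    Tendsto (fun k : ℕ => ⨆ x : EuclideanSpace ℝ (Fin d),
        |(∫ y, heatKernel d (x - y) t * u₀ y) - heatApprox d k u₀ x t|)
      atTop (nhds 0) :=
  squeeze_zero (fun _ => Real.iSup_nonneg fun _ => abs_nonneg _)
    (fun k => ciSup_le (abs_integral_sub_heatApprox_le ht hu₀ k))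
    ((tendsto_integral_heatTail_mul ht (integrable_mul_abs (fun _ => Real.exp_nonneg _) hu₀)).comp
      (tendsto_add_atTop_nat 1))

/-- Convergence: if `|u₀| ≤ C e^{-|x|²/(4t₀)}` a.e. and `t > t₀`, then
`sup_x |u(x,t) - u_k(x,t)| → 0` as `k → ∞`. -/
theorem stmt_9 (d : ℕ) (hd : 1 ≤ d) (C t₀ : ℝ) (hC : 0 < C) (ht₀ : 0 < t₀)
    (u₀ : EuclideanSpace ℝ (Fin d) → ℝ) (hmeas : Measurable u₀)
    (hbound : ∀ᵐ (x : EuclideanSpace ℝ (Fin d)) ∂volume,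
      |u₀ x| ≤ C * Real.exp (-‖x‖ ^ 2 / (4 * t₀)))
    (t : ℝ) (ht : t₀ < t) :
    Tendsto (fun k : ℕ => ⨆ x : EuclideanSpace ℝ (Fin d),
        |(∫ y, heatKernel d (x - y) t * u₀ y) - heatApprox d k u₀ x t|)
      atTop (nhds 0) := by
  exact stmt_9_general d (ht₀.trans ht)
    (integrable_exp_mul_of_abs_le_gaussian ht₀ ht hmeas.aestronglyMeasurable hbound)

end
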